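/- Let μ be a Borel probability measure on a separable metric space S, let ρ > 0, and let m ≥ 1 be an integer. Then ∫_S (1 − μ(B̄(p,ρ)))^m dμ(p) ≤ (1/(e·m)) ∫_S 1/μ(B̄(p,ρ)) dμ(p), where B̄(p,ρ) = {q ∈ S : dist(q,p) ≤ ρ} is the closed ball and the right-hand integral takes values in [0, ∞]. -/

import Mathlib

open MeasureTheory Metric ENNReal

lemma natCast_mul_mul_one_sub_pow_le_exp_neg_one (m : ℕ) {x : ℝ} (hx₀ : 0 ≤ x) (hx₁ : x ≤ 1) :
    m * x * (1 - x) ^ m ≤ Real.exp (-1) :=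
  calc
    m * x * (1 - x) ^ m ≤ m * x * Real.exp (-x) ^ m := by
      gcongr
      exact Real.one_sub_le_exp_neg x
    _ = m * x * Real.exp (-(m * x)) := by rw [← Real.exp_nat_mul, mul_neg]
    _ ≤ Real.exp (-1) := Real.mul_exp_neg_le_exp_neg_one (m * x)

lemma one_sub_pow_le_inv_exp_one_mul (m : ℕ) {u : ℝ≥0∞} (hu : u ≤ 1) :
    (1 - u) ^ m ≤ (ENNReal.ofReal (Real.exp 1) * m * u)⁻¹ := by
  lift u to NNReal using ne_top_of_le_ne_top one_ne_top hu
  have hu₁ : (u : ℝ) ≤ 1 := mod_cast hu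
  have one_sub_nonneg : 0 ≤ (1 - u : ℝ) := sub_nonneg.2 hu₁
  have real_bound : (1 - u : ℝ) ^ m * (Real.exp 1 * m * u) ≤ 1 :=
    calc
      (1 - u : ℝ) ^ m * (Real.exp 1 * m * u) = Real.exp 1 * (m * u * (1 - u) ^ m) := by ring
      _ ≤ Real.exp 1 * Real.exp (-1) := by
        gcongr
        exact natCast_mul_mul_one_sub_pow_le_exp_neg_one m u.coe_nonneg hu₁
      _ = 1 := by rw [← Real.exp_add, add_neg_cancel, Real.exp_zero]
  rw [ENNReal.le_inv_iff_mul_le]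
  calc
    (1 - (u : ℝ≥0∞)) ^ m * (ENNReal.ofReal (Real.exp 1) * m * u)
        = ENNReal.ofReal ((1 - u : ℝ) ^ m * (Real.exp 1 * m * u)) := by
      rw [ENNReal.ofReal_mul (pow_nonneg one_sub_nonneg m), ENNReal.ofReal_pow one_sub_nonneg,
        ENNReal.ofReal_sub _ u.coe_nonneg, ENNReal.ofReal_mul (by positivity),
        ENNReal.ofReal_mul (Real.exp_pos 1).le, ENNReal.ofReal_one, ENNReal.ofReal_natCast,
        ENNReal.ofReal_coe_nnreal]
    _ ≤ 1 := ENNReal.ofReal_le_one.2 real_bound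

theorem small_ball_integral_bound_general {α : Type*} [MeasurableSpace α] {μ : Measure α}
    {f : α → ℝ≥0∞} (hf : ∀ᵐ p ∂μ, f p ≤ 1) {m : ℕ} (hm : m ≠ 0) :
    ∫⁻ p, (1 - f p) ^ m ∂μ ≤ (ENNReal.ofReal (Real.exp 1) * m)⁻¹ * ∫⁻ p, (f p)⁻¹ ∂μ := by
  have exp_mul_ne_zero : ENNReal.ofReal (Real.exp 1) * m ≠ 0 := by
    simp [Real.exp_pos, hm]
  have exp_mul_ne_top : ENNReal.ofReal (Real.exp 1) * m ≠ ∞ :=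
    mul_ne_top ofReal_ne_top (natCast_ne_top m)
  calc
    ∫⁻ p, (1 - f p) ^ m ∂μ ≤ ∫⁻ p, (ENNReal.ofReal (Real.exp 1) * m * f p)⁻¹ ∂μ :=
      lintegral_mono_ae (hf.mono fun _ => one_sub_pow_le_inv_exp_one_mul m)
    _ = ∫⁻ p, (ENNReal.ofReal (Real.exp 1) * m)⁻¹ * (f p)⁻¹ ∂μ := by
      simp only [ENNReal.mul_inv (.inl exp_mul_ne_zero) (.inl exp_mul_ne_top)]
    _ = (ENNReal.ofReal (Real.exp 1) * m)⁻¹ * ∫⁻ p, (f p)⁻¹ ∂μ :=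
      lintegral_const_mul' _ _ (inv_ne_top.2 exp_mul_ne_zero)

/-- Small-ball inequality: for a Borel probability measure `μ` on a separable metric space,
`∫ (1 − μ(B̄(p,ρ)))^m dμ(p) ≤ (1/(e·m)) ∫ 1/μ(B̄(p,ρ)) dμ(p)`. -/
theorem small_ball_integral_bound {S : Type*} [MetricSpace S]
    [TopologicalSpace.SeparableSpace S] [MeasurableSpace S] [BorelSpace S]
    (μ : Measure S) [IsProbabilityMeasure μ] (ρ : ℝ) (hρ : 0 < ρ)
    (m : ℕ) (hm : 1 ≤ m) :
    ∫⁻ p, (1 - μ (closedBall p ρ)) ^ m ∂μ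
      ≤ (ENNReal.ofReal (Real.exp 1) * m)⁻¹ * ∫⁻ p, (μ (closedBall p ρ))⁻¹ ∂μ :=
  small_ball_integral_bound_general (.of_forall fun _ => prob_le_one) (Nat.one_le_iff_ne_zero.1 hm)
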